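/- Fix an integer m ≥ 0 and t ≥ 0. For h > 0, let M_h be the real 2×2 matrix with rows (1, √h) and (√h, 1), and let a(h) denote the (0,0) entry of (M_h)^m. Then lim_{h→0⁺} a(h)^{⌊t/h⌋} = exp(m(m−1)t/2). -/

import Mathlib

open Filter

open scoped Topology

/- With `f x = x ^ m`, the entry `a(h)` is the average `(f (1 + √h) + f (1 - √h)) / 2` of `f` over
one step of a symmetric random walk, because `1 ± √h` are the eigenvalues of `M_h`. The first-order
terms cancel and each second-order term carries `(√h)² = h`, so `a` has right derivative
`f'' 1 / 2 = m (m - 1) / 2` at `0`: this is the Itô correction. Finally, `⌊t / h⌋` factors of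
`1 + c h + o(h)` multiply up to `exp (c t)`. -/

section TwoByTwo

variable {R : Type*} [CommRing R]

-- Spectral decomposition; the factor `2` clears the denominators of the two eigenprojections.
lemma two_smul_fin_two_circulant_pow (a b : R) (n : ℕ) :
    (2 : R) • !![a, b; b, a] ^ n =
      (a + b) ^ n • !![1, 1; 1, 1] + (a - b) ^ n • !![1, -1; -1, 1] := by
  induction n with
  | zero => ext i j; fin_cases i <;> fin_cases j <;> simp <;> norm_num
  | succ n ih =>
    rw [pow_succ, ← smul_mul_assoc, ih]
    ext i j
    fin_cases i <;> fin_cases j <;> simp [Matrix.mul_apply, Fin.sum_univ_two] <;> ring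

lemma two_mul_fin_two_circulant_pow_apply_zero_zero (a b : R) (n : ℕ) :
    2 * (!![a, b; b, a] ^ n) 0 0 = (a + b) ^ n + (a - b) ^ n := by
  simpa using congr_fun₂ (two_smul_fin_two_circulant_pow a b n) 0 0

end TwoByTwo

lemma tendsto_symmetric_slope_zero {𝕜 E : Type*} [NontriviallyNormedField 𝕜] [NeZero (2 : 𝕜)]
    [NormedAddCommGroup E] [NormedSpace 𝕜 E] {f : 𝕜 → E} {f' : E} {x : 𝕜}
    (hf : HasDerivAt f f' x) :
    Tendsto (fun s ↦ (2 * s)⁻¹ • (f (x + s) - f (x - s))) (𝓝[≠] 0) (𝓝 f') := by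
  have hdiff : HasDerivAt (fun s ↦ f (x + s) - f (x - s)) ((2 : 𝕜) • f') 0 := by
    have hadd : HasDerivAt (fun s ↦ f (x + s)) f' 0 := .comp_const_add x 0 (by simpa using hf)
    have hsub : HasDerivAt (fun s ↦ f (x - s)) (-f') 0 := .comp_const_sub x 0 (by simpa using hf)
    simpa [two_smul] using hadd.fun_sub hsub
  simpa [smul_smul, mul_comm, inv_smul_smul₀ (two_ne_zero : (2 : 𝕜) ≠ 0)] using
    hdiff.tendsto_slope_zero.const_smul (2⁻¹ : 𝕜)

section AverageSqrt

variable {E : Type*} [NormedAddCommGroup E] [NormedSpace ℝ E] {f f' : ℝ → E} {f'' : E} {x h : ℝ}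

lemma hasDerivAt_average_add_sub_sqrt (hh : 0 < h) (hadd : HasDerivAt f (f' (x + √h)) (x + √h))
    (hsub : HasDerivAt f (f' (x - √h)) (x - √h)) :
    HasDerivAt (fun h ↦ (2⁻¹ : ℝ) • (f (x + √h) + f (x - √h)))
      ((2⁻¹ : ℝ) • (2 * √h)⁻¹ • (f' (x + √h) - f' (x - √h))) h := by
  have hsqrt : HasDerivAt (√·) (2 * √h)⁻¹ h := by
    simpa using Real.hasDerivAt_sqrt hh.ne'
  have hsum := (hadd.scomp h (hsqrt.const_add x)).add (hsub.scomp h (hsqrt.const_sub x))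
  refine (hsum.const_smul (2⁻¹ : ℝ)).congr_deriv ?_
  module

-- The derivative at `h > 0` is half the symmetric difference quotient of `f'` with step `√h`.
lemma hasDerivWithinAt_average_add_sub_sqrt_zero (hf : ∀ᶠ y in 𝓝 x, HasDerivAt f (f' y) y)
    (hf' : HasDerivAt f' f'' x) :
    HasDerivWithinAt (fun h ↦ (2⁻¹ : ℝ) • (f (x + √h) + f (x - √h))) ((2⁻¹ : ℝ) • f'')
      (Set.Ici 0) 0 := by
  have hadd : Tendsto (fun h ↦ x + √h) (𝓝 0) (𝓝 x) :=
    Continuous.tendsto' (by fun_prop) _ _ (by simp)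
  have hsub : Tendsto (fun h ↦ x - √h) (𝓝 0) (𝓝 x) :=
    Continuous.tendsto' (by fun_prop) _ _ (by simp)
  have hcont : ContinuousAt (fun h ↦ (2⁻¹ : ℝ) • (f (x + √h) + f (x - √h))) 0 := by
    have hfx : Tendsto f (𝓝 x) (𝓝 (f x)) := hf.self_of_nhds.continuousAt
    simpa [ContinuousAt] using ((hfx.comp hadd).add (hfx.comp hsub)).const_smul (2⁻¹ : ℝ)
  have hderiv : ∀ᶠ h in 𝓝[>] 0, HasDerivAt (fun h ↦ (2⁻¹ : ℝ) • (f (x + √h) + f (x - √h)))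
      ((2⁻¹ : ℝ) • (2 * √h)⁻¹ • (f' (x + √h) - f' (x - √h))) h := by
    filter_upwards [self_mem_nhdsWithin, nhdsWithin_le_nhds (hadd.eventually hf),
      nhdsWithin_le_nhds (hsub.eventually hf)] with h hh hfadd hfsub
    exact hasDerivAt_average_add_sub_sqrt hh hfadd hfsub
  have hsqrt : Tendsto (√·) (𝓝[>] 0) (𝓝[≠] 0) :=
    tendsto_nhdsWithin_iff.2 ⟨(Real.continuous_sqrt.tendsto' 0 0 Real.sqrt_zero).mono_left
      nhdsWithin_le_nhds, eventually_mem_nhdsWithin.mono fun _ hh ↦ (Real.sqrt_pos.2 hh).ne'⟩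
  refine hasDerivWithinAt_Ici_of_tendsto_deriv
    (fun h hh ↦ hh.differentiableAt.differentiableWithinAt) hcont.continuousWithinAt hderiv ?_
  refine (((tendsto_symmetric_slope_zero hf').comp hsqrt).const_smul (2⁻¹ : ℝ)).congr' ?_
  exact hderiv.mono fun h hh ↦ hh.deriv.symm

end AverageSqrt

lemma hasDerivWithinAt_fin_two_circulant_sqrt_pow_apply_zero_zero (a : ℝ) (m : ℕ) :
    HasDerivWithinAt (fun h ↦ (!![a, √h; √h, a] ^ m) 0 0) (m * (m - 1) * a ^ (m - 2) / 2)
      (Set.Ici 0) 0 := by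
  have hpow' : HasDerivAt (fun x : ℝ ↦ m * x ^ (m - 1)) (m * (m - 1) * a ^ (m - 2)) a := by
    refine ((hasDerivAt_pow (m - 1) a).const_mul (m : ℝ)).congr_deriv ?_
    cases m <;> simp [mul_assoc]
  have havg : HasDerivWithinAt (fun h ↦ (2⁻¹ : ℝ) • ((a + √h) ^ m + (a - √h) ^ m))
      ((2⁻¹ : ℝ) • (m * (m - 1) * a ^ (m - 2))) (Set.Ici 0) 0 :=
    hasDerivWithinAt_average_add_sub_sqrt_zero (.of_forall (hasDerivAt_pow m)) hpow'
  simpa only [← two_mul_fin_two_circulant_pow_apply_zero_zero, smul_eq_mul,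
    inv_mul_cancel_left₀ (two_ne_zero : (2 : ℝ) ≠ 0), div_eq_inv_mul] using havg

lemma tendsto_pow_exp_of_tendsto_mul_sub_one {α : Type*} {l : Filter α} {u : α → ℝ} {n : α → ℕ}
    {c : ℝ} (hu : Tendsto u l (𝓝 1)) (hnu : Tendsto (fun x ↦ n x * (u x - 1)) l (𝓝 c)) :
    Tendsto (fun x ↦ u x ^ n x) l (𝓝 (Real.exp c)) := by
  have hlog : Tendsto (fun x ↦ dslope Real.log 1 (u x)) l (𝓝 1) := by
    have hcont : ContinuousAt (dslope Real.log 1) 1 :=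
      continuousAt_dslope_same.2 (Real.differentiableAt_log one_ne_zero)
    simpa [Function.comp_def] using hcont.tendsto.comp hu
  have hexp : Tendsto (fun x ↦ Real.exp (n x * (u x - 1) * dslope Real.log 1 (u x))) l
      (𝓝 (Real.exp c)) := by
    simpa [Function.comp_def] using (Real.continuous_exp.tendsto _).comp (hnu.mul hlog)
  refine hexp.congr' ?_
  filter_upwards [hu.eventually_const_lt one_pos] with x hx
  have hslope : (u x - 1) * dslope Real.log 1 (u x) = Real.log (u x) := by
    simpa using sub_smul_dslope Real.log 1 (u x)
  rw [mul_assoc, hslope, Real.exp_nat_mul, Real.exp_log hx]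

lemma tendsto_natFloor_div_mul_nhdsGT_zero {K : Type*} [TopologicalSpace K] [Field K]
    [LinearOrder K] [IsStrictOrderedRing K] [OrderTopology K] [FloorRing K] {t : K} (ht : 0 ≤ t) :
    Tendsto (fun h ↦ (⌊t / h⌋₊ : K) * h) (𝓝[>] 0) (𝓝 t) := by
  simpa [Function.comp_def, div_eq_mul_inv] using
    (tendsto_nat_floor_mul_div_atTop ht).comp (tendsto_inv_nhdsGT_zero (𝕜 := K))

lemma tendsto_pow_natFloor_div_of_hasDerivWithinAt {f : ℝ → ℝ} {c t : ℝ} (hf0 : f 0 = 1)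
    (hf : HasDerivWithinAt f c (Set.Ioi 0) 0) (ht : 0 ≤ t) :
    Tendsto (fun h ↦ f h ^ ⌊t / h⌋₊) (𝓝[>] 0) (𝓝 (Real.exp (t * c))) := by
  have hslope : Tendsto (slope f 0) (𝓝[>] 0) (𝓝 c) :=
    (hasDerivWithinAt_iff_tendsto_slope' Set.self_notMem_Ioi).1 hf
  refine tendsto_pow_exp_of_tendsto_mul_sub_one (hf0 ▸ hf.continuousWithinAt.tendsto) ?_
  refine ((tendsto_natFloor_div_mul_nhdsGT_zero ht).mul hslope).congr fun h ↦ ?_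
  have hsub : h * slope f 0 h = f h - 1 := by
    simpa [hf0] using sub_smul_slope f 0 h
  rw [mul_assoc, hsub]

/-- For `m ∈ ℕ` and `t ≥ 0`, with `a(h)` the `(0,0)` entry of the `m`-th
power of `[[1, √h], [√h, 1]]`, one has `lim_{h→0⁺} a(h)^⌊t/h⌋ = exp(m(m−1)t/2)`. -/
theorem matrix_pow_entry_tendsto_brownian_moment (m : ℕ) (t : ℝ) (ht : 0 ≤ t) :
    Tendsto (fun h : ℝ =>
        ((!![1, Real.sqrt h; Real.sqrt h, 1] ^ m) 0 0) ^ ⌊t / h⌋₊)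
      (nhdsWithin 0 (Set.Ioi 0))
      (nhds (Real.exp ((m : ℝ) * ((m : ℝ) - 1) * t / 2))) := by
  have hentry : HasDerivWithinAt (fun h ↦ (!![1, √h; √h, 1] ^ m) 0 0) (m * (m - 1) / 2 : ℝ)
      (Set.Ioi 0) 0 := by
    simpa using (hasDerivWithinAt_fin_two_circulant_sqrt_pow_apply_zero_zero 1 m).Ioi_of_Ici
  rw [mul_comm _ t, mul_div_assoc]
  exact tendsto_pow_natFloor_div_of_hasDerivWithinAt (by simp [← Matrix.one_fin_two]) hentry ht
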